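/- arXiv:1808.05976 — 3 statements merged into one kernel-verified Lean document; each statement's English description precedes it below -/
import Mathlib

section
/- For every dimension n ≥ 1, every exponent p ∈ (1,∞) and every δ ≥ 0 there exists a positive constant a₁ = a₁(p,n,δ) such that for all vectors ξ, η ∈ ℝⁿ one has | |ξ|^{p−2} ξ − |η|^{p−2} η | ≤ a₁ · |ξ − η|^{1−δ} · ( |ξ| + |η| )^{p−2+δ}. -/
open scoped RealInnerProductSpace

/-!
Put `q = p - 2 ≥ -1` and let `‖y‖ ≤ ‖x‖`. In the splitting
`‖x‖^q x - ‖y‖^q y = ‖x‖^q (x - y) + (‖x‖^q - ‖y‖^q) y`, the tangent to `t ↦ t^(q+1)` at `‖x‖`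
bounds the second term by `|q| ‖x‖^q (‖x‖ - ‖y‖)`: this function is convex or concave according to
the sign of `q`. Since `q ≥ -1`, replacing `‖x‖^q` by `(‖x‖ + ‖y‖)^q` costs at most a factor `2`,
which settles `δ = 0`; for `δ > 0`, trade a factor `‖x - y‖^δ` for `(‖x‖ + ‖y‖)^δ`. At `p = 1` and
`δ = 0` the result is the Dunkl–Williams inequality.
-/

section Real

variable {a b q : ℝ}

lemma rpow_add_mul_sub_le_rpow {r : ℝ} (hr : 1 ≤ r) (ha : 0 < a) (hb : 0 ≤ b) :
    a ^ r + r * a ^ (r - 1) * (b - a) ≤ b ^ r := by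
  have bernoulli : 1 + r * (b / a - 1) ≤ (b / a) ^ r := by
    have h := one_add_mul_self_le_rpow_one_add (s := b / a - 1)
      (by linarith [div_nonneg hb ha.le]) hr
    rwa [add_sub_cancel] at h
  calc a ^ r + r * a ^ (r - 1) * (b - a) = a ^ r * (1 + r * (b / a - 1)) := by
        rw [Real.rpow_sub_one ha.ne']; field_simp
    _ ≤ a ^ r * (b / a) ^ r := by gcongr
    _ = b ^ r := by rw [← Real.mul_rpow ha.le (by positivity), mul_div_cancel₀ b ha.ne']

lemma rpow_le_rpow_add_mul_sub {r : ℝ} (hr₀ : 0 ≤ r) (hr₁ : r ≤ 1) (ha : 0 < a) (hb : 0 ≤ b) :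
    b ^ r ≤ a ^ r + r * a ^ (r - 1) * (b - a) := by
  have bernoulli : (b / a) ^ r ≤ 1 + r * (b / a - 1) := by
    have h := rpow_one_add_le_one_add_mul_self (s := b / a - 1)
      (by linarith [div_nonneg hb ha.le]) hr₀ hr₁
    rwa [add_sub_cancel] at h
  calc b ^ r = a ^ r * (b / a) ^ r := by
        rw [← Real.mul_rpow ha.le (by positivity), mul_div_cancel₀ b ha.ne']
    _ ≤ a ^ r * (1 + r * (b / a - 1)) := by gcongr
    _ = a ^ r + r * a ^ (r - 1) * (b - a) := by
        rw [Real.rpow_sub_one ha.ne']; field_simp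

lemma abs_rpow_sub_rpow_mul_le (hq : -1 ≤ q) (hb : 0 ≤ b) (hba : b ≤ a) :
    |a ^ q - b ^ q| * b ≤ |q| * a ^ q * (a - b) := by
  rcases hb.eq_or_lt with rfl | hb
  · rw [mul_zero, sub_zero]; positivity
  have ha : 0 < a := hb.trans_le hba
  have ha_succ : a ^ (q + 1) = a ^ q * a := Real.rpow_add_one ha.ne' q
  have hb_succ : b ^ (q + 1) = b ^ q * b := Real.rpow_add_one hb.ne' q
  rcases le_total 0 q with hq₀ | hq₀
  · have tangent := rpow_add_mul_sub_le_rpow (r := q + 1) (by linarith) ha hb.le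
    rw [add_sub_cancel_right, ha_succ, hb_succ] at tangent
    have mono : b ^ q ≤ a ^ q := by gcongr
    rw [abs_of_nonneg (sub_nonneg.2 mono), abs_of_nonneg hq₀]
    linarith
  · have tangent := rpow_le_rpow_add_mul_sub (r := q + 1) (by linarith) (by linarith) ha hb.le
    rw [add_sub_cancel_right, ha_succ, hb_succ] at tangent
    have anti : a ^ q ≤ b ^ q := Real.rpow_le_rpow_of_nonpos hb hba hq₀
    rw [abs_of_nonpos (sub_nonpos.2 anti), abs_of_nonpos hq₀]
    linarith

lemma rpow_le_two_mul_add_rpow (hq : -1 ≤ q) (hb : 0 ≤ b) (hba : b ≤ a) :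
    a ^ q ≤ 2 * (a + b) ^ q := by
  have ha : 0 ≤ a := hb.trans hba
  rcases le_or_gt 0 q with hq₀ | hq₀
  · calc a ^ q ≤ (a + b) ^ q := by gcongr; linarith
      _ ≤ 2 * (a + b) ^ q := le_mul_of_one_le_left (by positivity) one_le_two
  · rcases ha.eq_or_lt with rfl | ha
    · rw [Real.zero_rpow hq₀.ne]; positivity
    have half_le : (2 : ℝ)⁻¹ ≤ 2 ^ q := by
      rw [← Real.rpow_neg_one]
      exact Real.rpow_le_rpow_of_exponent_le one_le_two hq
    calc a ^ q = 2 * (2⁻¹ * a ^ q) := by ring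
      _ ≤ 2 * (2 ^ q * a ^ q) := by gcongr
      _ = 2 * (2 * a) ^ q := by rw [Real.mul_rpow zero_le_two ha.le]
      _ ≤ 2 * (a + b) ^ q := by
        gcongr 2 * ?_
        exact Real.rpow_le_rpow_of_nonpos (by linarith) (by linarith) hq₀.le

lemma mul_rpow_le_rpow_one_sub_mul_rpow_add {δ : ℝ} (hδ : 0 ≤ δ) (ha : 0 ≤ a) (hab : a ≤ b) :
    a * b ^ q ≤ a ^ (1 - δ) * b ^ (q + δ) := by
  rcases ha.eq_or_lt with rfl | ha
  · rw [zero_mul]; positivity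
  have hb : 0 < b := ha.trans_le hab
  calc a * b ^ q = a ^ (1 - δ) * (b ^ q * a ^ δ) := by
        rw [mul_left_comm, ← Real.rpow_add ha, sub_add_cancel, Real.rpow_one, mul_comm]
    _ ≤ a ^ (1 - δ) * (b ^ q * b ^ δ) := by gcongr
    _ = a ^ (1 - δ) * b ^ (q + δ) := by rw [Real.rpow_add hb]

end Real

section Vector

variable {E : Type*} [SeminormedAddCommGroup E] [NormedSpace ℝ E] {q : ℝ}

lemma norm_rpow_smul_sub_rpow_smul_le_of_norm_le (hq : -1 ≤ q) {x y : E} (hyx : ‖y‖ ≤ ‖x‖) :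
    ‖‖x‖ ^ q • x - ‖y‖ ^ q • y‖ ≤ (1 + |q|) * (‖x - y‖ * ‖x‖ ^ q) := by
  have split : ‖x‖ ^ q • x - ‖y‖ ^ q • y = ‖x‖ ^ q • (x - y) + (‖x‖ ^ q - ‖y‖ ^ q) • y := by
    module
  calc ‖‖x‖ ^ q • x - ‖y‖ ^ q • y‖
      ≤ ‖x‖ ^ q * ‖x - y‖ + |‖x‖ ^ q - ‖y‖ ^ q| * ‖y‖ := by
        rw [split]
        refine (norm_add_le _ _).trans_eq ?_
        rw [norm_smul_of_nonneg (by positivity), norm_smul, Real.norm_eq_abs]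
    _ ≤ ‖x‖ ^ q * ‖x - y‖ + |q| * ‖x‖ ^ q * (‖x‖ - ‖y‖) := by
        gcongr ‖x‖ ^ q * ‖x - y‖ + ?_
        exact abs_rpow_sub_rpow_mul_le hq (norm_nonneg y) hyx
    _ ≤ ‖x‖ ^ q * ‖x - y‖ + |q| * ‖x‖ ^ q * ‖x - y‖ := by
        gcongr
        exact norm_sub_norm_le x y
    _ = (1 + |q|) * (‖x - y‖ * ‖x‖ ^ q) := by ring

lemma norm_rpow_smul_sub_rpow_smul_le (hq : -1 ≤ q) (x y : E) :
    ‖‖x‖ ^ q • x - ‖y‖ ^ q • y‖ ≤ 2 * (1 + |q|) * (‖x - y‖ * (‖x‖ + ‖y‖) ^ q) := by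
  wlog hyx : ‖y‖ ≤ ‖x‖ generalizing x y
  · rw [norm_sub_rev, norm_sub_rev x y, add_comm ‖x‖ ‖y‖]
    exact this y x (le_of_not_ge hyx)
  calc ‖‖x‖ ^ q • x - ‖y‖ ^ q • y‖ ≤ (1 + |q|) * (‖x - y‖ * ‖x‖ ^ q) :=
        norm_rpow_smul_sub_rpow_smul_le_of_norm_le hq hyx
    _ ≤ (1 + |q|) * (‖x - y‖ * (2 * (‖x‖ + ‖y‖) ^ q)) := by
        gcongr
        exact rpow_le_two_mul_add_rpow hq (norm_nonneg y) hyx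
    _ = 2 * (1 + |q|) * (‖x - y‖ * (‖x‖ + ‖y‖) ^ q) := by ring

theorem vector_inequality_one_general {p δ : ℝ} (hp : 1 ≤ p) (hδ : 0 ≤ δ) (ξ η : E) :
    ‖(‖ξ‖ ^ (p - 2)) • ξ - (‖η‖ ^ (p - 2)) • η‖ ≤
      2 * (1 + |p - 2|) * ‖ξ - η‖ ^ (1 - δ) * (‖ξ‖ + ‖η‖) ^ (p - 2 + δ) := by
  calc ‖(‖ξ‖ ^ (p - 2)) • ξ - (‖η‖ ^ (p - 2)) • η‖
      ≤ 2 * (1 + |p - 2|) * (‖ξ - η‖ * (‖ξ‖ + ‖η‖) ^ (p - 2)) :=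
        norm_rpow_smul_sub_rpow_smul_le (by linarith) ξ η
    _ ≤ 2 * (1 + |p - 2|) * (‖ξ - η‖ ^ (1 - δ) * (‖ξ‖ + ‖η‖) ^ (p - 2 + δ)) := by
        gcongr 2 * (1 + |p - 2|) * ?_
        exact mul_rpow_le_rpow_one_sub_mul_rpow_add hδ (norm_nonneg _) (norm_sub_le ξ η)
    _ = 2 * (1 + |p - 2|) * ‖ξ - η‖ ^ (1 - δ) * (‖ξ‖ + ‖η‖) ^ (p - 2 + δ) :=
        (mul_assoc _ _ _).symm

end Vector

/-- For every dimension `n ≥ 1`, exponent `p ∈ (1,∞)` and `δ ≥ 0` there is a positive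
constant `a₁` such that `| |ξ|^{p-2} ξ − |η|^{p-2} η | ≤ a₁ |ξ − η|^{1−δ} (|ξ|+|η|)^{p−2+δ}`
for all `ξ, η ∈ ℝⁿ`. -/
theorem vector_inequality_one
    (n : ℕ) (hn : 1 ≤ n) (p δ : ℝ) (hp : 1 < p) (hδ : 0 ≤ δ) :
    ∃ a₁ : ℝ, 0 < a₁ ∧
      ∀ ξ η : EuclideanSpace ℝ (Fin n),
        ‖(‖ξ‖ ^ (p - 2)) • ξ - (‖η‖ ^ (p - 2)) • η‖ ≤
          a₁ * ‖ξ - η‖ ^ (1 - δ) * (‖ξ‖ + ‖η‖) ^ (p - 2 + δ) :=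
  ⟨2 * (1 + |p - 2|), by positivity, vector_inequality_one_general hp.le hδ⟩
end

section
/- (Babuška–Lax–Milgram) Let X and Y be reflexive real Banach spaces and let B : X × Y → ℝ be a continuous bilinear form satisfying: (i) B is non-degenerate in the second variable, i.e. for every nonzero y ∈ Y there exists x ∈ X with B(x,y) ≠ 0; and (ii) there is a constant c > 0 such that c · ‖x‖_X ≤ sup_{y ∈ Y, ‖y‖_Y ≤ 1} |B(x,y)| for every x ∈ X. Then for every continuous linear functional ℓ on Y there exists a unique x ∈ X such that B(x,y) = ℓ(y) for all y ∈ Y; moreover this solution satisfies c · ‖x‖_X ≤ ‖ℓ‖_{Y'}. -/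
open NormedSpace

/-!
View `B` as an operator `X → Y'`. The inf-sup condition says `c ‖x‖ ≤ ‖B x‖`, so `B` is injective
with closed range, and the same inequality is the a priori estimate. By Hahn–Banach the range is
also dense unless some nonzero functional on `Y'` vanishes on it; by reflexivity such a functional
is evaluation at some `y ≠ 0` with `B x y = 0` for all `x`, contradicting non-degeneracy.
-/

theorem iSup_unitClosedBall_eq_norm {𝕜₁ 𝕜₂ E F : Type*} [DenselyNormedField 𝕜₁]
    [NontriviallyNormedField 𝕜₂] {σ : 𝕜₁ →+* 𝕜₂} [RingHomIsometric σ]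
    [NormedAddCommGroup E] [NormedSpace 𝕜₁ E] [SeminormedAddCommGroup F] [NormedSpace 𝕜₂ F]
    (f : E →SL[σ] F) : ⨆ x : {x : E // ‖x‖ ≤ 1}, ‖f x‖ = ‖f‖ := by
  rw [← f.sSup_unitClosedBall_eq_norm, sSup_image']
  exact (Equiv.subtypeEquivRight fun _ ↦ mem_closedBall_zero_iff.symm).iSup_congr fun _ ↦ rfl

section

variable {𝕜 : Type*} [RCLike 𝕜]

theorem exists_strongDual_eq_zero_on_and_ne_zero {E : Type*} [SeminormedAddCommGroup E]
    [NormedSpace 𝕜 E] {p : Submodule 𝕜 E} (hp : IsClosed (p : Set E)) {x : E} (hx : x ∉ p) :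
    ∃ f : StrongDual 𝕜 E, (∀ y ∈ p, f y = 0) ∧ f x ≠ 0 := by
  obtain ⟨g, hg⟩ := SeparatingDual.exists_ne_zero (R := 𝕜) (x := p.mkQ x)
    (by rwa [Ne, Submodule.mkQ_apply, Submodule.Quotient.mk_eq_zero])
  refine ⟨g ∘L p.mkQL, fun y hy ↦ ?_, by simpa using hg⟩
  have hy_mk : p.mkQ y = 0 := (Submodule.Quotient.mk_eq_zero p).2 hy
  simp [hy_mk]

theorem topologicalClosure_eq_top_of_forall_strongDual {E : Type*} [SeminormedAddCommGroup E]
    [NormedSpace 𝕜 E] {p : Submodule 𝕜 E}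
    (hp : ∀ f : StrongDual 𝕜 E, (∀ x ∈ p, f x = 0) → f = 0) : p.topologicalClosure = ⊤ := by
  by_contra hne
  obtain ⟨x, hx⟩ := SetLike.exists_not_mem_of_ne_top _ hne rfl
  obtain ⟨f, hfp, hfx⟩ :=
    exists_strongDual_eq_zero_on_and_ne_zero p.isClosed_topologicalClosure hx
  have hf : f = 0 := hp f fun y hy ↦ hfp y (p.le_topologicalClosure hy)
  exact hfx (by rw [hf, zero_apply])

theorem topologicalClosure_eq_top_of_separatesPoints_of_reflexive {Y : Type*}
    [SeminormedAddCommGroup Y] [NormedSpace 𝕜 Y]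
    (hY : Function.Surjective (inclusionInDoubleDual 𝕜 Y)) {p : Submodule 𝕜 (StrongDual 𝕜 Y)}
    (hp : ∀ y : Y, y ≠ 0 → ∃ f ∈ p, f y ≠ 0) : p.topologicalClosure = ⊤ := by
  refine topologicalClosure_eq_top_of_forall_strongDual fun φ hφ ↦ ?_
  obtain ⟨y, rfl⟩ := hY φ
  have hy : y = 0 := by
    by_contra hne
    obtain ⟨f, hfp, hfy⟩ := hp y hne
    exact hfy (hφ f hfp)
  rw [hy, map_zero]

theorem babuska_lax_milgram_general {σ : 𝕜 →+* 𝕜} [RingHomSurjective σ] {X Y : Type*}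
    [NormedAddCommGroup X] [NormedSpace 𝕜 X] [CompleteSpace X]
    [NormedAddCommGroup Y] [NormedSpace 𝕜 Y]
    (hYrefl : Function.Surjective (inclusionInDoubleDual 𝕜 Y))
    (B : X →SL[σ] Y →L[𝕜] 𝕜)
    (hnondeg : ∀ y : Y, y ≠ 0 → ∃ x : X, B x y ≠ 0)
    (c : ℝ) (hc : 0 < c)
    (hinfsup : ∀ x : X, c * ‖x‖ ≤ ⨆ y : {y : Y // ‖y‖ ≤ 1}, ‖B x y‖) :
    ∀ ℓ : Y →L[𝕜] 𝕜, ∃ x : X,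
      (∀ y : Y, B x y = ℓ y) ∧ c * ‖x‖ ≤ ‖ℓ‖ ∧
        ∀ x' : X, (∀ y : Y, B x' y = ℓ y) → x' = x := by
  have hbound (x : X) : c * ‖x‖ ≤ ‖B x‖ := (hinfsup x).trans_eq (iSup_unitClosedBall_eq_norm (B x))
  obtain ⟨K, hanti⟩ : ∃ K, AntilipschitzWith K B :=
    antilipschitzWith_iff_exists_mul_le_norm.2 ⟨c, hc, hbound⟩
  have hclosed : IsClosed (B.range : Set (Y →L[𝕜] 𝕜)) := hanti.isClosed_range B.uniformContinuous
  have hdense : B.range.topologicalClosure = ⊤ :=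
    topologicalClosure_eq_top_of_separatesPoints_of_reflexive hYrefl fun y hy ↦
      let ⟨x, hx⟩ := hnondeg y hy
      ⟨B x, ⟨x, rfl⟩, hx⟩
  have hsurj : Function.Surjective B :=
    LinearMap.range_eq_top.1 (hclosed.submodule_topologicalClosure_eq.symm.trans hdense)
  intro ℓ
  obtain ⟨x, rfl⟩ := hsurj ℓ
  exact ⟨x, fun _ ↦ rfl, hbound x, fun x' hx' ↦ hanti.injective (ContinuousLinearMap.ext hx')⟩

end

/-- **Babuška–Lax–Milgram.** Let `X` and `Y` be reflexive real Banach spaces and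
`B : X × Y → ℝ` a continuous bilinear form that is non-degenerate in the second
variable and satisfies the inf-sup condition `c ‖x‖ ≤ sup_{‖y‖ ≤ 1} |B(x,y)|`.
Then for every `ℓ ∈ Y'` there is a unique `x ∈ X` with `B(x,·) = ℓ`, and
`c ‖x‖ ≤ ‖ℓ‖`. -/
theorem babuska_lax_milgram
    {X Y : Type*} [NormedAddCommGroup X] [NormedSpace ℝ X] [CompleteSpace X]
    [NormedAddCommGroup Y] [NormedSpace ℝ Y] [CompleteSpace Y]
    (hXrefl : Function.Surjective (inclusionInDoubleDual ℝ X))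
    (hYrefl : Function.Surjective (inclusionInDoubleDual ℝ Y))
    (B : X →L[ℝ] Y →L[ℝ] ℝ)
    (hnondeg : ∀ y : Y, y ≠ 0 → ∃ x : X, B x y ≠ 0)
    (c : ℝ) (hc : 0 < c)
    (hinfsup : ∀ x : X, c * ‖x‖ ≤ ⨆ y : {y : Y // ‖y‖ ≤ 1}, |B x y|) :
    ∀ ℓ : Y →L[ℝ] ℝ, ∃ x : X,
      (∀ y : Y, B x y = ℓ y) ∧ c * ‖x‖ ≤ ‖ℓ‖ ∧
        ∀ x' : X, (∀ y : Y, B x' y = ℓ y) → x' = x :=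
  babuska_lax_milgram_general hYrefl B hnondeg c hc hinfsup
end

section
/- Let u : ℝ³ → ℝ³ be a smooth (C^∞) compactly supported vector field with div u(x) = 0 for every x ∈ ℝ³. Then there exists a smooth vector field A : ℝ³ → ℝ³ such that curl A(x) = u(x) and div A(x) = 0 for every x ∈ ℝ³. -/
open MeasureTheory

/-- The partial derivative `∂ᵢ uⱼ` of a vector field `u : ℝ³ → ℝ³`, computed from the
Fréchet derivative. -/
noncomputable def pderivComp (u : EuclideanSpace ℝ (Fin 3) → EuclideanSpace ℝ (Fin 3))
    (i j : Fin 3) (x : EuclideanSpace ℝ (Fin 3)) : ℝ :=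
  fderiv ℝ u x (EuclideanSpace.single i 1) j

/-- The divergence of a vector field `u : ℝ³ → ℝ³`, computed from the Fréchet
derivative: `div u = ∂₁u₁ + ∂₂u₂ + ∂₃u₃`. -/
noncomputable def vecDiv (u : EuclideanSpace ℝ (Fin 3) → EuclideanSpace ℝ (Fin 3))
    (x : EuclideanSpace ℝ (Fin 3)) : ℝ :=
  ∑ i : Fin 3, fderiv ℝ u x (EuclideanSpace.single i 1) i

/-- The curl of a vector field `u : ℝ³ → ℝ³`:
`curl u = (∂₂u₃ − ∂₃u₂, ∂₃u₁ − ∂₁u₃, ∂₁u₂ − ∂₂u₁)`. -/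
noncomputable def vecCurl (u : EuclideanSpace ℝ (Fin 3) → EuclideanSpace ℝ (Fin 3))
    (x : EuclideanSpace ℝ (Fin 3)) : EuclideanSpace ℝ (Fin 3) :=
  (WithLp.equiv 2 (Fin 3 → ℝ)).symm
    ![pderivComp u 1 2 x - pderivComp u 2 1 x,
      pderivComp u 2 0 x - pderivComp u 0 2 x,
      pderivComp u 0 1 x - pderivComp u 1 0 x]

/-!
Write `u = 𝓕 F` with `F` a Schwartz field. On the Fourier side `div` and `curl` become, up to the
factor `-2πi`, the algebraic operations `v ⬝ᵥ ·` and `v ⨯₃ ·`, so `div u = 0` says `v ⬝ᵥ F v = 0`.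
By the triple product expansion `v ⨯₃ (v ⨯₃ F v) = (v ⬝ᵥ F v) v - ‖v‖² F v = -‖v‖² F v`, so
`G v = (2πi)⁻¹ ‖v‖⁻² (v ⨯₃ F v)` satisfies `-2πi v ⨯₃ G v = F v` and `v ⬝ᵥ G v = 0`, that is,
`curl 𝓕 G = u` and `div 𝓕 G = 0`. The singularity of `G` at the origin is of order `‖v‖⁻¹`, hence
integrable in dimension three, and `G` decays rapidly, which makes `𝓕 G` smooth. The potential of
the real field `u` is the real part of `𝓕 G`.
-/

open scoped FourierTransform SchwartzMap Matrix RealInnerProductSpace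

local notation "ℝ³" => EuclideanSpace ℝ (Fin 3)
local notation "ℂ³" => (Fin 3 → ℂ)

section Integrability

variable {V E : Type*} [NormedAddCommGroup V] [NormedSpace ℝ V] [FiniteDimensional ℝ V]
  [MeasurableSpace V] [BorelSpace V] [NormedAddCommGroup E] [NormedSpace ℝ E]
  {μ : Measure V} [μ.IsAddHaarMeasure]

lemma integrable_norm_rpow_neg_smul {f : V → E} {C α : ℝ} (hα : 0 ≤ α)
    (hα' : α < Module.finrank ℝ V) (hf : Integrable f μ) (hC : ∀ v, ‖f v‖ ≤ C) :
    Integrable (fun v => ‖v‖ ^ (-α) • f v) μ := by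
  have hmeas : AEStronglyMeasurable (fun v => ‖v‖ ^ (-α) • f v) μ :=
    (by fun_prop : Measurable fun v : V => ‖v‖ ^ (-α)).aestronglyMeasurable.smul
      hf.aestronglyMeasurable
  have hnorm (v : V) : ‖‖v‖ ^ (-α) • f v‖ = ‖v‖ ^ (-α) * ‖f v‖ := by
    rw [norm_smul, Real.norm_of_nonneg (by positivity)]
  have hdim : 1 ≤ Module.finrank ℝ V := by exact_mod_cast hα.trans_lt hα'
  have hball : IntegrableOn (fun v => ‖v‖ ^ (-α) • f v) (Metric.ball 0 1) μ := by
    refine integrableOn_ball_of_norm_le_rpow (C := C) hdim hα' (.of_forall fun v => ?_) hmeas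
    rw [hnorm, mul_comm C]
    gcongr
    exact hC v
  have hcompl : IntegrableOn (fun v => ‖v‖ ^ (-α) • f v) (Metric.ball 0 1)ᶜ μ := by
    refine hf.norm.integrableOn.mono' hmeas.restrict ?_
    filter_upwards [ae_restrict_mem measurableSet_ball.compl] with v hv
    have hv : 1 ≤ ‖v‖ := by simpa using hv
    rw [hnorm]
    exact mul_le_of_le_one_left (norm_nonneg _)
      (Real.rpow_le_one_of_one_le_of_nonpos hv (neg_nonpos.2 hα))
  simpa using hball.union hcompl

lemma integrable_pow_mul_norm_of_norm_le_rpow_neg_mul_schwartz {F : Type*} [NormedAddCommGroup F]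
    {g : V → F} {f : 𝓢(V, E)} {C α : ℝ} (hα : 0 ≤ α) (hα' : α < Module.finrank ℝ V)
    (hg : AEStronglyMeasurable g μ) (hgf : ∀ v, ‖g v‖ ≤ C * (‖v‖ ^ (-α) * ‖f v‖)) (n : ℕ) :
    Integrable (fun v => ‖v‖ ^ n * ‖g v‖) μ := by
  obtain ⟨D, -, hD⟩ := f.decay n 0
  have hint : Integrable (fun v => ‖v‖ ^ (-α) • (‖v‖ ^ n * ‖f v‖)) μ :=
    integrable_norm_rpow_neg_smul hα hα' (f.integrable_pow_mul μ n) fun v => by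
      simpa using hD v
  refine (hint.const_mul C).mono' ?_ (.of_forall fun v => ?_)
  · exact (by fun_prop : Measurable fun v : V => ‖v‖ ^ n).aestronglyMeasurable.mul hg.norm
  · rw [Real.norm_of_nonneg (by positivity)]
    calc ‖v‖ ^ n * ‖g v‖ ≤ ‖v‖ ^ n * (C * (‖v‖ ^ (-α) * ‖f v‖)) := by gcongr; exact hgf v
      _ = C * (‖v‖ ^ (-α) • (‖v‖ ^ n * ‖f v‖)) := by rw [smul_eq_mul]; ring

end Integrability

section Fourier

variable {V E F : Type*} [NormedAddCommGroup V] [InnerProductSpace ℝ V] [FiniteDimensional ℝ V]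
  [MeasurableSpace V] [BorelSpace V] [NormedAddCommGroup E] [NormedSpace ℂ E]
  [NormedAddCommGroup F] [NormedSpace ℂ F] {g : V → E}

lemma clm_apply_fourier [CompleteSpace E] [CompleteSpace F] (L : E →L[ℂ] F) (hg : Integrable g)
    (x : V) : L (𝓕 g x) = 𝓕 (fun v => L (g v)) x := by
  rw [Real.fourier_eq, Real.fourier_eq,
    ← L.integral_comp_comm ((Real.fourierIntegral_convergent_iff x).2 hg)]
  simp only [Circle.smul_def, map_smul]

lemma eq_zero_of_fourier_eq_zero [CompleteSpace E] (hc : Continuous g) (hg : Integrable g)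
    (h : ∀ x, 𝓕 g x = 0) : g = 0 := by
  have h𝓕 : 𝓕 g = 0 := funext h
  rw [← hc.fourierInv_fourier_eq hg (h𝓕 ▸ integrable_zero _ _ _), h𝓕]
  ext x
  simp [Real.fourierInv_eq]

lemma fderiv_fourier_apply (hg : Integrable g) (hg' : Integrable fun v => ‖v‖ * ‖g v‖) (x w : V) :
    fderiv ℝ (𝓕 g) x w = 𝓕 (fun v => -(2 * Real.pi * Complex.I) • ⟪v, w⟫ • g v) x := by
  have hint : Integrable (VectorFourier.fourierSMulRight (innerSL ℝ) g) := by
    refine (hg'.const_mul (2 * Real.pi * ‖innerSL ℝ (E := V)‖)).mono'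
      hg.aestronglyMeasurable.fourierSMulRight (.of_forall fun v => ?_)
    rw [← mul_assoc]
    exact VectorFourier.norm_fourierSMulRight_le _ _ _
  rw [Real.fderiv_fourier hg hg', Real.fourier_continuousLinearMap_apply hint]
  simp only [VectorFourier.fourierSMulRight_apply]
  rfl

lemma integrable_inner_smul (hg : Integrable g) (hg' : Integrable fun v => ‖v‖ * ‖g v‖) (w : V) :
    Integrable fun v => ⟪v, w⟫ • g v := by
  refine (hg'.const_mul ‖w‖).mono' ?_ (.of_forall fun v => ?_)
  · exact (by fun_prop : Continuous fun v : V => ⟪v, w⟫).aestronglyMeasurable.smul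
      hg.aestronglyMeasurable
  · rw [norm_smul, ← mul_assoc, mul_comm ‖w‖]
    gcongr
    exact norm_inner_le_norm v w

lemma sum_clm_fderiv_fourier [CompleteSpace E] [CompleteSpace F] {ι : Type*} [Fintype ι]
    (L : ι → E →L[ℂ] F) (w : ι → V) (hg : Integrable g)
    (hg' : Integrable fun v => ‖v‖ * ‖g v‖) (x : V) :
    ∑ i, L i (fderiv ℝ (𝓕 g) x (w i)) =
      𝓕 (fun v => -(2 * Real.pi * Complex.I) • ∑ i, ⟪v, w i⟫ • L i (g v)) x := by
  have hint (i : ι) : Integrable fun v => -(2 * Real.pi * Complex.I) • ⟪v, w i⟫ • g v :=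
    (integrable_inner_smul hg hg' (w i)).smul _
  simp_rw [fderiv_fourier_apply hg hg', clm_apply_fourier _ (hint _), Real.fourier_eq]
  rw [← integral_finsetSum _ fun i _ =>
    (Real.fourierIntegral_convergent_iff x).2 ((L i).integrable_comp (hint i))]
  simp only [(L _).map_smul_of_tower, Finset.smul_sum]

end Fourier

section ComplexFields

variable {ι : Type*}

/-- The inclusion of `ℝ^ι` into `ℂ^ι`, linking real vector fields, and real frequencies, to the
complex vectors on which the Fourier transform acts. The target carries the sup norm, so that
Mathlib's `⨯₃` and `⬝ᵥ` apply to it. -/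
noncomputable def complexify : EuclideanSpace ℝ ι →L[ℝ] (ι → ℂ) :=
  ContinuousLinearMap.pi fun i => Complex.ofRealCLM ∘L EuclideanSpace.proj i

/-- The coordinatewise real part of a vector of `ℂ^ι`, a left inverse of `complexify`. -/
noncomputable def coordRe : (ι → ℂ) →L[ℝ] EuclideanSpace ℝ ι :=
  (EuclideanSpace.equiv ι ℝ).symm.toContinuousLinearMap ∘L
    ContinuousLinearMap.pi fun i => Complex.reCLM ∘L ContinuousLinearMap.proj i

/-- The divergence of a complex vector field on `ℝ³`, the counterpart of `vecDiv`. -/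
noncomputable def complexDiv (B : ℝ³ → ℂ³) (x : ℝ³) : ℂ :=
  ∑ i, fderiv ℝ B x (EuclideanSpace.single i 1) i

/-- The curl of a complex vector field on `ℝ³`, the counterpart of `vecCurl`, written as
`∇ ⨯₃ B = ∑ i, eᵢ ⨯₃ ∂ᵢB`. -/
noncomputable def complexCurl (B : ℝ³ → ℂ³) (x : ℝ³) : ℂ³ :=
  ∑ i, Pi.single i 1 ⨯₃ fderiv ℝ B x (EuclideanSpace.single i 1)

@[simp] lemma complexify_apply (v : EuclideanSpace ℝ ι) (i : ι) :
    complexify v i = v i := rfl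

@[simp] lemma coordRe_apply (z : ι → ℂ) (i : ι) :
    coordRe z i = (z i).re := rfl

@[simp] lemma coordRe_complexify (v : EuclideanSpace ℝ ι) :
    coordRe (complexify v) = v := rfl

lemma norm_complexify_le [Fintype ι] (v : EuclideanSpace ℝ ι) : ‖complexify v‖ ≤ ‖v‖ :=
  (pi_norm_le_iff_of_nonneg (norm_nonneg v)).2 fun i => by simpa using PiLp.norm_apply_le v i

lemma complexify_dotProduct_self [Fintype ι] (v : EuclideanSpace ℝ ι) :
    complexify v ⬝ᵥ complexify v = (‖v‖ : ℂ) ^ 2 := by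
  rw [← Complex.ofReal_pow, EuclideanSpace.real_norm_sq_eq]
  simp [dotProduct, pow_two]

lemma complexDiv_complexify_comp {u : ℝ³ → ℝ³} {x : ℝ³} (hu : DifferentiableAt ℝ u x) :
    complexDiv (complexify ∘ u) x = vecDiv u x := by
  simp [complexDiv, vecDiv, complexify.hasFDerivAt.comp x hu.hasFDerivAt |>.fderiv]

lemma vecDiv_coordRe_comp {B : ℝ³ → ℂ³} {x : ℝ³} (hB : DifferentiableAt ℝ B x) :
    vecDiv (coordRe ∘ B) x = (complexDiv B x).re := by
  simp [complexDiv, vecDiv, coordRe.hasFDerivAt.comp x hB.hasFDerivAt |>.fderiv]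

lemma vecCurl_coordRe_comp {B : ℝ³ → ℂ³} {x : ℝ³} (hB : DifferentiableAt ℝ B x) :
    vecCurl (coordRe ∘ B) x = coordRe (complexCurl B x) := by
  ext k
  fin_cases k <;>
    simp [vecCurl, pderivComp, complexCurl, Fin.sum_univ_three, cross_apply,
      coordRe.hasFDerivAt.comp x hB.hasFDerivAt |>.fderiv] <;>
    ring

variable {g : ℝ³ → ℂ³}

lemma complexDiv_fourier (hg : Integrable g) (hg' : Integrable fun v => ‖v‖ * ‖g v‖) (x : ℝ³) :
    complexDiv (𝓕 g) x =
      𝓕 (fun v => -(2 * Real.pi * Complex.I) • (complexify v ⬝ᵥ g v)) x := by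
  refine (sum_clm_fderiv_fourier (fun i => ContinuousLinearMap.proj i)
    (fun i => EuclideanSpace.single i 1) hg hg' x).trans ?_
  simp [dotProduct, EuclideanSpace.inner_single_right]

lemma complexCurl_fourier (hg : Integrable g) (hg' : Integrable fun v => ‖v‖ * ‖g v‖) (x : ℝ³) :
    complexCurl (𝓕 g) x =
      𝓕 (fun v => -(2 * Real.pi * Complex.I) • (complexify v ⨯₃ g v)) x := by
  refine (sum_clm_fderiv_fourier
    (fun i => (crossProduct (Pi.single i (1 : ℂ))).toContinuousLinearMap)
    (fun i => EuclideanSpace.single i 1) hg hg' x).trans ?_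
  have hbasis (v : ℝ³) : ∑ i, (v i : ℂ) • (Pi.single i 1 : ℂ³) = complexify v := by
    ext k
    simp [Finset.sum_apply, Pi.single_apply]
  simp only [← hbasis, EuclideanSpace.inner_single_right, map_sum, map_smul, LinearMap.sum_apply,
    LinearMap.smul_apply]
  simp

lemma complexify_dotProduct_eq_zero_of_complexDiv_fourier_eq_zero (hc : Continuous g)
    (hg : Integrable g) (hg' : Integrable fun v => ‖v‖ * ‖g v‖)
    (hdiv : ∀ x, complexDiv (𝓕 g) x = 0) (v : ℝ³) : complexify v ⬝ᵥ g v = 0 := by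
  have hcont : Continuous fun v => -(2 * Real.pi * Complex.I) • (complexify v ⬝ᵥ g v) :=
    (complexify.continuous.dotProduct hc).fun_const_smul _
  have hdot : Integrable fun v => complexify v ⬝ᵥ g v := integrable_finsetSum _ fun i _ => by
    simpa [EuclideanSpace.inner_single_right] using
      (ContinuousLinearMap.proj (R := ℂ) i).integrable_comp
        (integrable_inner_smul hg hg' (EuclideanSpace.single i 1))
  have hzero := eq_zero_of_fourier_eq_zero hcont (hdot.fun_smul _) fun x => by
    rw [← complexDiv_fourier hg hg', hdiv]
  simpa [Real.pi_ne_zero] using congrFun hzero v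

end ComplexFields

section BiotSavart

/-- The inverse Fourier transform of the Biot–Savart potential of the field `𝓕 F`. At `v = 0`, where
the formula is singular, the value is `0`. -/
noncomputable def biotSavartSymbol (F : ℝ³ → ℂ³) (v : ℝ³) : ℂ³ :=
  ((2 * Real.pi * Complex.I)⁻¹ * ((‖v‖ : ℂ) ^ 2)⁻¹) • (complexify v ⨯₃ F v)

lemma complexify_dotProduct_biotSavartSymbol (F : ℝ³ → ℂ³) (v : ℝ³) :
    complexify v ⬝ᵥ biotSavartSymbol F v = 0 := by
  rw [biotSavartSymbol, dotProduct_smul, dot_self_cross, smul_zero]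

lemma smul_complexify_cross_biotSavartSymbol {F : ℝ³ → ℂ³} {v : ℝ³} (hv : v ≠ 0)
    (hF : complexify v ⬝ᵥ F v = 0) :
    -(2 * Real.pi * Complex.I) • (complexify v ⨯₃ biotSavartSymbol F v) = F v := by
  have hv' : (‖v‖ : ℂ) ≠ 0 := by simpa using hv
  rw [biotSavartSymbol, map_smul, cross_cross_eq_smul_sub_smul', hF, complexify_dotProduct_self,
    zero_smul, zero_sub, smul_neg, neg_smul_neg, smul_smul, smul_smul]
  convert one_smul ℂ (F v)
  field_simp [Complex.two_pi_I_ne_zero]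

lemma exists_norm_biotSavartSymbol_le :
    ∃ C, ∀ (F : ℝ³ → ℂ³) v, ‖biotSavartSymbol F v‖ ≤ C * (‖v‖⁻¹ * ‖F v‖) := by
  let cross := (crossProduct (R := ℂ)).toContinuousBilinearMap
  refine ⟨‖(2 * Real.pi * Complex.I : ℂ)⁻¹‖ * ‖cross‖, fun F v => ?_⟩
  have hcross : ‖complexify v ⨯₃ F v‖ ≤ ‖cross‖ * ‖v‖ * ‖F v‖ := by
    refine (cross.le_opNorm₂ _ _).trans ?_
    gcongr
    exact norm_complexify_le v
  have hv : (‖v‖ ^ 2)⁻¹ * ‖v‖ = ‖v‖⁻¹ := by field_simp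
  calc ‖biotSavartSymbol F v‖
      = ‖(2 * Real.pi * Complex.I : ℂ)⁻¹‖ * (‖v‖ ^ 2)⁻¹ * ‖complexify v ⨯₃ F v‖ := by
        rw [biotSavartSymbol, norm_smul, norm_mul, norm_inv ((‖v‖ : ℂ) ^ 2), norm_pow,
          Complex.norm_real, norm_norm]
    _ ≤ ‖(2 * Real.pi * Complex.I : ℂ)⁻¹‖ * (‖v‖ ^ 2)⁻¹ * (‖cross‖ * ‖v‖ * ‖F v‖) := by gcongr
    _ = ‖(2 * Real.pi * Complex.I : ℂ)⁻¹‖ * ‖cross‖ * ((‖v‖ ^ 2)⁻¹ * ‖v‖ * ‖F v‖) := by ring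
    _ = ‖(2 * Real.pi * Complex.I : ℂ)⁻¹‖ * ‖cross‖ * (‖v‖⁻¹ * ‖F v‖) := by rw [hv]

lemma aestronglyMeasurable_biotSavartSymbol {F : ℝ³ → ℂ³} (hF : Continuous F) :
    AEStronglyMeasurable (biotSavartSymbol F) := by
  have hcross : Continuous fun v => complexify v ⨯₃ F v :=
    ((crossProduct (R := ℂ)).toContinuousBilinearMap.continuous₂).comp
      (complexify.continuous.prodMk hF)
  exact (by fun_prop : Measurable fun v : ℝ³ =>
    (2 * Real.pi * Complex.I)⁻¹ * ((‖v‖ : ℂ) ^ 2)⁻¹).aestronglyMeasurable.smul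
      hcross.aestronglyMeasurable

variable (F : 𝓢(ℝ³, ℂ³))

lemma integrable_pow_mul_norm_biotSavartSymbol (n : ℕ) :
    Integrable fun v => ‖v‖ ^ n * ‖biotSavartSymbol F v‖ := by
  obtain ⟨C, hC⟩ := exists_norm_biotSavartSymbol_le
  refine integrable_pow_mul_norm_of_norm_le_rpow_neg_mul_schwartz (f := F) (C := C) zero_le_one
    (by simp) (aestronglyMeasurable_biotSavartSymbol F.continuous) (fun v => ?_) n
  simpa [Real.rpow_neg_one] using hC F v

lemma integrable_norm_mul_norm_biotSavartSymbol :
    Integrable fun v => ‖v‖ * ‖biotSavartSymbol F v‖ := by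
  simpa using integrable_pow_mul_norm_biotSavartSymbol F 1

lemma integrable_biotSavartSymbol : Integrable (biotSavartSymbol F) :=
  (integrable_norm_iff (aestronglyMeasurable_biotSavartSymbol F.continuous)).1 <| by
    simpa using integrable_pow_mul_norm_biotSavartSymbol F 0

lemma contDiff_fourier_biotSavartSymbol : ContDiff ℝ (⊤ : ℕ∞) (𝓕 (biotSavartSymbol F)) :=
  Real.contDiff_fourier fun n _ => integrable_pow_mul_norm_biotSavartSymbol F n

lemma complexDiv_fourier_biotSavartSymbol (x : ℝ³) :
    complexDiv (𝓕 (biotSavartSymbol F)) x = 0 := by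
  rw [complexDiv_fourier (integrable_biotSavartSymbol F)
    (integrable_norm_mul_norm_biotSavartSymbol F)]
  simp [complexify_dotProduct_biotSavartSymbol, Real.fourier_eq]

lemma complexCurl_fourier_biotSavartSymbol {F : 𝓢(ℝ³, ℂ³)}
    (hF : ∀ v, complexify v ⬝ᵥ F v = 0) (x : ℝ³) :
    complexCurl (𝓕 (biotSavartSymbol F)) x = 𝓕 (F : ℝ³ → ℂ³) x := by
  rw [complexCurl_fourier (integrable_biotSavartSymbol F)
    (integrable_norm_mul_norm_biotSavartSymbol F)]
  refine Real.fourier_congr_ae ?_ x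
  filter_upwards [Measure.ae_ne volume 0] with v hv
  exact smul_complexify_cross_biotSavartSymbol hv (hF v)

end BiotSavart

theorem divergence_free_has_vector_potential_general (u : 𝓢(ℝ³, ℝ³))
    (hdiv : ∀ x, vecDiv u x = 0) :
    ∃ A : ℝ³ → ℝ³,
      ContDiff ℝ (⊤ : ℕ∞) A ∧ (∀ x, vecCurl A x = u x) ∧ ∀ x, vecDiv A x = 0 := by
  let F : 𝓢(ℝ³, ℂ³) := 𝓕⁻ (u.postcompCLM complexify)
  have hFu : 𝓕 (F : ℝ³ → ℂ³) = complexify ∘ u := by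
    rw [← SchwartzMap.fourier_coe, FourierTransform.fourier_fourierInv_eq]
    rfl
  have hF : ∀ v, complexify v ⬝ᵥ F v = 0 :=
    complexify_dotProduct_eq_zero_of_complexDiv_fourier_eq_zero F.continuous F.integrable
      (by simpa using F.integrable_pow_mul volume 1) fun x => by
      rw [hFu, complexDiv_complexify_comp u.differentiableAt, hdiv, Complex.ofReal_zero]
  have hB := contDiff_fourier_biotSavartSymbol F
  have hB' : Differentiable ℝ (𝓕 (biotSavartSymbol F)) := hB.differentiable (by simp)
  refine ⟨coordRe ∘ 𝓕 (biotSavartSymbol F), coordRe.contDiff.comp hB, fun x => ?_, fun x => ?_⟩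
  · rw [vecCurl_coordRe_comp (hB' x), complexCurl_fourier_biotSavartSymbol hF, hFu,
      Function.comp_apply, coordRe_complexify]
  · rw [vecDiv_coordRe_comp (hB' x), complexDiv_fourier_biotSavartSymbol, Complex.zero_re]

/-- A smooth compactly supported divergence-free vector field on `ℝ³` admits a smooth
divergence-free vector potential: `u = curl A` with `div A = 0`. -/
theorem divergence_free_has_vector_potential
    (u : EuclideanSpace ℝ (Fin 3) → EuclideanSpace ℝ (Fin 3))
    (hu : ContDiff ℝ (⊤ : ℕ∞) u) (huc : HasCompactSupport u)
    (hdiv : ∀ x, vecDiv u x = 0) :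
    ∃ A : EuclideanSpace ℝ (Fin 3) → EuclideanSpace ℝ (Fin 3),
      ContDiff ℝ (⊤ : ℕ∞) A ∧ (∀ x, vecCurl A x = u x) ∧ ∀ x, vecDiv A x = 0 := by
  exact divergence_free_has_vector_potential_general (huc.toSchwartzMap hu) hdiv
end
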